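/- There exists an absolute constant C > 0 such that the following holds. Let N and m be positive integers, let A ⊆ [N] be nonempty with density α = |A|/N, and let B be a finite subset of (0,1]. Then Σ_{b ∈ B} |1̂_A(b)| ≤ C · |A| · α^{−1/(2m)} · E_{2m}(B; 1/N)^{1/(2m)}. -/

import Mathlib

/-- `e(x) = e^{2πix}`. -/
noncomputable def eu (x : ℝ) : ℂ := Complex.exp (2 * Real.pi * Complex.I * x)

/-- The Fourier transform of the indicator of `A`: `1̂_A(γ) = ∑_{a ∈ A} e(aγ)`. -/
noncomputable def hatInd (A : Finset ℕ) (γ : ℝ) : ℂ := ∑ a ∈ A, eu (a * γ)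

/-- The approximate `2m`-fold additive energy of a finite set of reals:
the number of tuples `(b₁, …, b₂ₘ) ∈ 𝒞^{2m}` with
`|b₁ + ⋯ + bₘ - bₘ₊₁ - ⋯ - b₂ₘ| ≤ δ`. -/
noncomputable def approxEnergy (m : ℕ) (𝒞 : Finset ℝ) (δ : ℝ) : ℕ :=
  (((Fintype.piFinset fun _ : Fin m => 𝒞) ×ˢ Fintype.piFinset fun _ : Fin m => 𝒞).filter
    fun p => |(∑ i, p.1 i) - ∑ i, p.2 i| ≤ δ).card

lemma eu_add (x y : ℝ) : eu (x + y) = eu x * eu y := by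
  simp only [eu, ← Complex.exp_add]
  congr 1
  push_cast
  ring

lemma eu_eq_one_iff (x : ℝ) : eu x = 1 ↔ ∃ n : ℤ, x = n := by
  rw [eu, Complex.exp_eq_one_iff]
  refine exists_congr fun n => ?_
  rw [show (2 * Real.pi * Complex.I * x : ℂ) = x * (2 * Real.pi * Complex.I) by ring,
    mul_left_inj' Complex.two_pi_I_ne_zero]
  exact_mod_cast Iff.rfl

lemma eu_nat (n : ℕ) : eu n = 1 := (eu_eq_one_iff _).2 ⟨n, by simp⟩

lemma eu_nat_mul (n : ℕ) (x : ℝ) : eu (n * x) = eu x ^ n := by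
  rw [eu, eu, ← Complex.exp_nat_mul]
  congr 1
  push_cast
  ring

lemma conj_eu (x : ℝ) : (starRingEnd ℂ) (eu x) = eu (-x) := by
  rw [eu, eu, ← Complex.exp_conj]
  congr 1
  simp [Complex.conj_ofNat]

lemma eu_sum {ι : Type*} (s : Finset ι) (f : ι → ℝ) : eu (∑ i ∈ s, f i) = ∏ i ∈ s, eu (f i) := by
  simp only [eu, ← Complex.exp_sum]
  congr 1
  push_cast
  rw [Finset.mul_sum]

/-- Orthogonality of the additive characters modulo `N`. -/
lemma sum_Icc_eu_div {N : ℕ} (hN : 0 < N) {r s : ℕ} (hr : r < N) (hs : s < N) :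
    ∑ a ∈ Finset.Icc 1 N, eu (a * ((r - s : ℝ) / N)) = if r = s then (N : ℂ) else 0 := by
  have hN' : (N : ℝ) ≠ 0 := by positivity
  split_ifs with h
  · subst h
    simp [show eu 0 = 1 by simpa using eu_nat 0]
  · have hne : eu ((r - s : ℝ) / N) ≠ 1 := by
      rw [Ne, eu_eq_one_iff]
      rintro ⟨n, hn⟩
      rw [div_eq_iff hN'] at hn
      have hz : (r : ℤ) - s = n * N := by exact_mod_cast hn
      have h1 : ((r : ℤ) - s) = 0 := Int.eq_zero_of_abs_lt_dvd ⟨n, by rw [hz, mul_comm]⟩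
        (by rw [abs_lt]; omega)
      omega
    have hpow : eu ((r - s : ℝ) / N) ^ N = 1 := by
      rw [← eu_nat_mul, eu_eq_one_iff]
      exact ⟨r - s, by field_simp; push_cast; ring⟩
    simp only [eu_nat_mul]
    have hg := mul_geom_sum (eu ((r - s : ℝ) / N)) N
    rw [hpow, sub_self, mul_eq_zero, or_iff_right (sub_ne_zero.2 hne)] at hg
    rw [← Finset.Ico_add_one_right_eq_Icc, Finset.sum_Ico_eq_sum_range]
    simp only [pow_add, ← Finset.mul_sum, Nat.add_sub_cancel, hg, mul_zero]

/-- Parseval's identity modulo `N`. -/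
lemma parseval_mod {N : ℕ} (hN : 0 < N) (d : ℕ → ℂ) :
    ∑ a ∈ Finset.Icc 1 N, ‖∑ r ∈ Finset.range N, d r * eu (a * (r / N : ℝ))‖ ^ 2 =
      N * ∑ r ∈ Finset.range N, ‖d r‖ ^ 2 := by
  apply Complex.ofReal_injective
  push_cast
  simp only [← Complex.mul_conj', map_sum, map_mul, conj_eu, Finset.sum_mul_sum]
  rw [Finset.sum_comm, Finset.mul_sum]
  refine Finset.sum_congr rfl fun r hr => ?_
  rw [Finset.sum_comm]
  have key : ∀ s ∈ Finset.range N, ∑ a ∈ Finset.Icc 1 N, d r * eu (a * (r / N : ℝ)) *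
      ((starRingEnd ℂ) (d s) * eu (-(a * (s / N : ℝ)))) =
      if r = s then N * (d r * (starRingEnd ℂ) (d r)) else 0 := by
    intro s hs
    have h := sum_Icc_eu_div hN (Finset.mem_range.1 hr) (Finset.mem_range.1 hs)
    calc _ = d r * (starRingEnd ℂ) (d s) *
          ∑ a ∈ Finset.Icc 1 N, eu (a * ((r - s : ℝ) / N)) := by
          rw [Finset.mul_sum]
          refine Finset.sum_congr rfl fun a _ => ?_
          rw [show (a * ((r - s : ℝ) / N)) = a * (r / N : ℝ) + -(a * (s / N : ℝ)) by ring, eu_add]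
          ring
      _ = _ := by
          rw [h]
          split_ifs with hrs
          · subst hrs; ring
          · simp
  rw [Finset.sum_congr rfl key, Finset.sum_ite_eq, if_pos hr]

lemma sum_range_mul_eq {R : Type*} [AddCommMonoid R] (f : ℕ → R) (M N : ℕ) :
    ∑ j ∈ Finset.range (M * N), f j =
      ∑ q ∈ Finset.range M, ∑ r ∈ Finset.range N, f (q * N + r) := by
  induction M with
  | zero => simp
  | succ M ih => rw [Nat.succ_mul, Finset.sum_range_add, ih, Finset.sum_range_succ]

/-- Bessel's inequality for frequencies `j / N` covering the circle `M` times. -/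
lemma bessel_mod {N : ℕ} (hN : 0 < N) (M : ℕ) (d : ℕ → ℂ) :
    ∑ a ∈ Finset.Icc 1 N, ‖∑ j ∈ Finset.range (M * N), d j * eu (a * (j / N : ℝ))‖ ^ 2 ≤
      N * M * ∑ j ∈ Finset.range (M * N), ‖d j‖ ^ 2 := by
  have hN' : (N : ℝ) ≠ 0 := by positivity
  have hpt : ∀ a ∈ Finset.Icc 1 N,
      ‖∑ j ∈ Finset.range (M * N), d j * eu (a * (j / N : ℝ))‖ ^ 2 ≤
      M * ∑ q ∈ Finset.range M,
        ‖∑ r ∈ Finset.range N, d (q * N + r) * eu (a * (r / N : ℝ))‖ ^ 2 := by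
    intro a _
    have hper : ∀ q r : ℕ, eu (a * ((q * N + r : ℕ) / N : ℝ)) = eu (a * (r / N : ℝ)) := by
      intro q r
      rw [show (a * ((q * N + r : ℕ) / N : ℝ)) = ((a * q : ℕ) : ℝ) + a * (r / N : ℝ) by
        push_cast; field_simp, eu_add, eu_nat, one_mul]
    rw [sum_range_mul_eq]
    simp only [hper]
    calc _ ≤ (∑ q ∈ Finset.range M,
          ‖∑ r ∈ Finset.range N, d (q * N + r) * eu (a * (r / N : ℝ))‖) ^ 2 := by
          gcongr
          exact norm_sum_le _ _
      _ ≤ _ := by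
          simpa using sq_sum_le_card_mul_sum_sq (s := Finset.range M)
            (f := fun q => ‖∑ r ∈ Finset.range N, d (q * N + r) * eu (a * (r / N : ℝ))‖)
  refine (Finset.sum_le_sum hpt).trans (le_of_eq ?_)
  rw [← Finset.mul_sum, Finset.sum_comm, sum_range_mul_eq]
  simp only [parseval_mod hN (fun r => d (_ * N + r))]
  rw [← Finset.mul_sum]
  ring

/-- The bound `bessel_mod` for frequencies grouped by a map `j` into the grid. -/
lemma sum_norm_sq_grid_le {ι : Type*} (X : Finset ι) {N : ℕ} (hN : 0 < N) (M : ℕ)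
    (j : ι → ℕ) (hj : ∀ x ∈ X, j x < M * N) (c : ι → ℂ) (hc : ∀ x ∈ X, ‖c x‖ ≤ 1) :
    ∑ a ∈ Finset.Icc 1 N, ‖∑ x ∈ X, c x * eu (a * (j x / N : ℝ))‖ ^ 2 ≤
      N * M * ((X ×ˢ X).filter fun p => j p.1 = j p.2).card := by
  classical
  have hmaps : ∀ x ∈ X, j x ∈ Finset.range (M * N) := fun x hx => Finset.mem_range.2 (hj x hx)
  have hfib : ∀ a : ℕ, ∑ x ∈ X, c x * eu (a * (j x / N : ℝ)) =
      ∑ k ∈ Finset.range (M * N), (∑ x ∈ X with j x = k, c x) * eu (a * (k / N : ℝ)) := by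
    intro a
    rw [← Finset.sum_fiberwise_of_maps_to hmaps]
    refine Finset.sum_congr rfl fun k _ => ?_
    rw [Finset.sum_mul]
    refine Finset.sum_congr rfl fun x hx => ?_
    rw [(Finset.mem_filter.1 hx).2]
  simp only [hfib]
  refine (bessel_mod hN M _).trans ?_
  gcongr
  have hcard : ((X ×ˢ X).filter fun p => j p.1 = j p.2).card =
      ∑ k ∈ Finset.range (M * N), (X.filter fun x => j x = k).card ^ 2 := by
    rw [Finset.card_eq_sum_card_fiberwise (f := fun p => j p.1) (t := Finset.range (M * N))]
    · refine Finset.sum_congr rfl fun k _ => ?_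
      rw [sq, ← Finset.card_product]
      congr 1
      ext p
      simp only [Finset.mem_filter, Finset.mem_product]
      grind
    · intro p hp
      simp only [Finset.coe_filter, Finset.mem_product, Set.mem_ofPred_eq] at hp
      exact hmaps _ hp.1.1
  rw [hcard]
  push_cast
  refine Finset.sum_le_sum fun k _ => ?_
  gcongr
  refine (norm_sum_le _ _).trans ?_
  refine (Finset.sum_le_card_nsmul _ _ 1 fun x hx => hc x (Finset.mem_filter.1 hx).1).trans ?_
  simp

/-- A large sieve inequality for bounded coefficients and arbitrary frequencies in `[0, M)`. -/
lemma sum_norm_sq_expSum_le {ι : Type*} (X : Finset ι) {N : ℕ} (hN : 0 < N) (M : ℕ)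
    (s : ι → ℝ) (hs0 : ∀ x ∈ X, 0 ≤ s x) (hsM : ∀ x ∈ X, s x < M)
    (c : ι → ℂ) (hc : ∀ x ∈ X, ‖c x‖ ≤ 1) :
    ∑ a ∈ Finset.Icc 1 N, ‖∑ x ∈ X, c x * eu (a * s x)‖ ^ 2 ≤
      Real.exp (2 * Real.pi) ^ 2 *
        (N * M * ((X ×ˢ X).filter fun p => |s p.1 - s p.2| ≤ 1 / N).card) := by
  have hNpos : (0 : ℝ) < N := by positivity
  set j : ι → ℕ := fun x => ⌊N * s x⌋₊ with hj
  set θ : ι → ℝ := fun x => N * s x - j x with hθ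
  have hθ0 : ∀ x ∈ X, 0 ≤ θ x := fun x hx =>
    sub_nonneg.2 (Nat.floor_le (mul_nonneg hNpos.le (hs0 x hx)))
  have hθ1 : ∀ x ∈ X, θ x < 1 := fun x _ => by
    have := Nat.lt_floor_add_one (N * s x)
    simp only [hθ, hj]
    linarith
  have hjM : ∀ x ∈ X, j x < M * N := fun x hx => by
    rw [hj, Nat.floor_lt (mul_nonneg hNpos.le (hs0 x hx))]
    push_cast
    nlinarith [hsM x hx]
  set E : ℝ := Nat.cast ((X ×ˢ X).filter fun p => |s p.1 - s p.2| ≤ 1 / N).card with hE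
  have hsame : (((X ×ˢ X).filter fun p => j p.1 = j p.2).card : ℝ) ≤ E := by
    rw [hE]
    norm_cast
    refine Finset.card_le_card fun p hp => ?_
    simp only [Finset.mem_filter, Finset.mem_product] at hp ⊢
    obtain ⟨⟨h1, h2⟩, h⟩ := hp
    refine ⟨⟨h1, h2⟩, ?_⟩
    have e1 : N * (s p.1 - s p.2) = θ p.1 - θ p.2 := by simp only [hθ, h]; ring
    rw [le_div_iff₀ hNpos, ← abs_of_pos hNpos, ← abs_mul, mul_comm, e1, abs_le]
    constructor <;> linarith [hθ0 _ h1, hθ0 _ h2, hθ1 _ h1, hθ1 _ h2]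
  set G : ℕ → ℕ → ℂ := fun r a => ∑ x ∈ X, c x * (θ x : ℂ) ^ r * eu (a * (j x / N : ℝ)) with hG
  have hGb : ∀ r, ∑ a ∈ Finset.Icc 1 N, ‖G r a‖ ^ 2 ≤ N * M * E := by
    intro r
    refine (sum_norm_sq_grid_le X hN M j hjM (fun x => c x * (θ x : ℂ) ^ r) ?_).trans
      (by gcongr)
    intro x hx
    rw [norm_mul, norm_pow, Complex.norm_real, Real.norm_of_nonneg (hθ0 x hx)]
    exact mul_le_one₀ (hc x hx) (pow_nonneg (hθ0 x hx) _) (pow_le_one₀ (hθ0 x hx) (hθ1 x hx).le)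
  set w : ℕ → ℝ := fun r => (2 * Real.pi) ^ r / r.factorial with hw
  have hw0 : ∀ r, 0 ≤ w r := fun r => by simp only [hw]; positivity
  set P : ℕ → ℕ → ℂ := fun R a => ∑ r ∈ Finset.range R,
    (2 * Real.pi * Complex.I * (a / N : ℝ)) ^ r / r.factorial * G r a with hP
  have hPlim : ∀ a : ℕ, Filter.Tendsto (fun R => P R a) Filter.atTop
      (nhds (∑ x ∈ X, c x * eu (a * s x))) := by
    intro a
    have hrew : ∀ R, P R a = ∑ x ∈ X, c x * eu (a * (j x / N : ℝ)) *
        ∑ r ∈ Finset.range R, (2 * Real.pi * Complex.I * (a / N : ℝ) * θ x) ^ r / r.factorial := by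
      intro R
      simp only [hP, hG, Finset.mul_sum]
      rw [Finset.sum_comm]
      refine Finset.sum_congr rfl fun x _ => Finset.sum_congr rfl fun r _ => ?_
      rw [mul_pow _ (θ x : ℂ)]
      ring
    simp only [hrew]
    refine tendsto_finsetSum _ fun x _ => ?_
    have hx : eu (a * s x) = eu (a * (j x / N : ℝ)) *
        Complex.exp (2 * Real.pi * Complex.I * (a / N : ℝ) * θ x) := by
      rw [show (a * s x : ℝ) = a * (j x / N : ℝ) + a / N * θ x by
        simp only [hθ]; field_simp; ring, eu_add]
      congr 1
      rw [eu]
      congr 1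
      push_cast
      ring
    rw [hx, ← mul_assoc]
    refine Filter.Tendsto.const_mul _ ?_
    rw [Complex.exp_eq_exp_ℂ]
    exact (NormedSpace.expSeries_div_hasSum_exp _).tendsto_sum_nat
  have hPb : ∀ R, ∑ a ∈ Finset.Icc 1 N, ‖P R a‖ ^ 2 ≤
      Real.exp (2 * Real.pi) ^ 2 * (N * M * E) := by
    intro R
    have hWe : ∑ r ∈ Finset.range R, w r ≤ Real.exp (2 * Real.pi) :=
      Real.sum_le_exp_of_nonneg (by positivity) R
    have hW0 : 0 ≤ ∑ r ∈ Finset.range R, w r := Finset.sum_nonneg fun r _ => hw0 r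
    have hpt : ∀ a ∈ Finset.Icc 1 N, ‖P R a‖ ^ 2 ≤
        (∑ r ∈ Finset.range R, w r) * ∑ r ∈ Finset.range R, w r * ‖G r a‖ ^ 2 := by
      intro a ha
      have haN : (a / N : ℝ) ≤ 1 := by
        rw [div_le_one hNpos]
        exact_mod_cast (Finset.mem_Icc.1 ha).2
      have h1 : ‖P R a‖ ≤ ∑ r ∈ Finset.range R, w r * ‖G r a‖ := by
        refine norm_sum_le_of_le _ fun r _ => ?_
        rw [norm_mul]
        gcongr
        simp only [hw, norm_div, norm_pow, norm_mul, Complex.norm_I, Complex.norm_real,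
          Complex.norm_natCast, Complex.norm_ofNat, Real.norm_natCast,
          Real.norm_of_nonneg Real.pi_pos.le, mul_one]
        refine div_le_div_of_nonneg_right (pow_le_pow_left₀ (by positivity) ?_ r) (by positivity)
        exact mul_le_of_le_one_right (by positivity) haN
      calc ‖P R a‖ ^ 2 ≤ (∑ r ∈ Finset.range R, w r * ‖G r a‖) ^ 2 := by gcongr
        _ ≤ _ := Finset.sum_sq_le_sum_mul_sum_of_sq_le_mul _ (fun r _ => hw0 r)
            (fun r _ => mul_nonneg (hw0 r) (sq_nonneg _)) (fun r _ => le_of_eq (by ring))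
    calc _ ≤ ∑ a ∈ Finset.Icc 1 N,
          (∑ r ∈ Finset.range R, w r) * ∑ r ∈ Finset.range R, w r * ‖G r a‖ ^ 2 :=
          Finset.sum_le_sum hpt
      _ = (∑ r ∈ Finset.range R, w r) *
          ∑ r ∈ Finset.range R, w r * ∑ a ∈ Finset.Icc 1 N, ‖G r a‖ ^ 2 := by
          rw [← Finset.mul_sum, Finset.sum_comm]
          simp only [Finset.mul_sum]
      _ ≤ (∑ r ∈ Finset.range R, w r) * ∑ r ∈ Finset.range R, w r * (N * M * E) := by
          gcongr with r _
          exact hGb r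
      _ = (∑ r ∈ Finset.range R, w r) ^ 2 * (N * M * E) := by
          rw [← Finset.sum_mul]
          ring
      _ ≤ _ := by gcongr
  exact le_of_tendsto (tendsto_finsetSum _ fun a _ => ((hPlim a).norm.pow 2))
    (Filter.Eventually.of_forall hPb)

/-- The `2m`-th moment over `[1, N]` of an exponential sum with bounded coefficients is controlled
by the approximate additive energy of its frequencies. -/
lemma sum_norm_pow_expSum_le {N : ℕ} (hN : 0 < N) (m : ℕ) (B : Finset ℝ)
    (hB : ∀ b ∈ B, 0 < b ∧ b ≤ 1) (c : ℝ → ℂ) (hc : ∀ b, ‖c b‖ ≤ 1) :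
    ∑ a ∈ Finset.Icc 1 N, ‖∑ b ∈ B, c b * eu (a * b)‖ ^ (2 * m) ≤
      Real.exp (2 * Real.pi) ^ 2 * (N * (m + 1) * approxEnergy m B (1 / N)) := by
  have hpow : ∀ a : ℕ, ‖∑ b ∈ B, c b * eu (a * b)‖ ^ (2 * m) =
      ‖∑ x ∈ Fintype.piFinset fun _ : Fin m => B,
        (∏ i, c (x i)) * eu (a * ∑ i, x i)‖ ^ 2 := by
    intro a
    rw [mul_comm 2 m, pow_mul, ← norm_pow]
    congr 2
    rw [Finset.sum_pow']
    refine Finset.sum_congr rfl fun x _ => ?_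
    rw [Finset.prod_mul_distrib, Finset.mul_sum, eu_sum]
  simp only [hpow]
  have h := sum_norm_sq_expSum_le (Fintype.piFinset fun _ : Fin m => B) hN (m + 1)
    (fun x => ∑ i, x i) ?_ ?_ (fun x => ∏ i, c (x i)) ?_
  · exact_mod_cast h
  · intro x hx
    exact Finset.sum_nonneg fun i _ => (hB _ (Fintype.mem_piFinset.1 hx i)).1.le
  · intro x hx
    have h1 : ∑ i, x i ≤ ∑ _i : Fin m, (1 : ℝ) :=
      Finset.sum_le_sum fun i _ => (hB _ (Fintype.mem_piFinset.1 hx i)).2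
    simp only [Finset.sum_const, Finset.card_univ, Fintype.card_fin, nsmul_eq_mul, mul_one] at h1
    push_cast
    linarith
  · intro x _
    rw [norm_prod]
    exact Finset.prod_le_one (fun _ _ => norm_nonneg _) fun _ _ => hc _

lemma exists_norm_le_one_mul_eq_norm (z : ℂ) : ∃ c : ℂ, ‖c‖ ≤ 1 ∧ c * z = ‖z‖ := by
  rcases eq_or_ne z 0 with rfl | hz
  · exact ⟨0, by simp⟩
  · have hz' : (‖z‖ : ℂ) ≠ 0 := by simpa using hz
    refine ⟨(starRingEnd ℂ) z / ‖z‖, by simp [hz], ?_⟩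
    rw [div_mul_eq_mul_div, Complex.conj_mul', sq, mul_div_cancel_right₀ _ hz']

lemma sum_norm_hatInd_le (A : Finset ℕ) (B : Finset ℝ) : ∃ c : ℝ → ℂ, (∀ b, ‖c b‖ ≤ 1) ∧
    ∑ b ∈ B, ‖hatInd A b‖ ≤ ∑ a ∈ A, ‖∑ b ∈ B, c b * eu (a * b)‖ := by
  choose c hc hcz using fun b : ℝ => exists_norm_le_one_mul_eq_norm (hatInd A b)
  refine ⟨c, hc, ?_⟩
  have h : ((∑ b ∈ B, ‖hatInd A b‖ : ℝ) : ℂ) = ∑ a ∈ A, ∑ b ∈ B, c b * eu (a * b) := by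
    push_cast
    rw [Finset.sum_comm]
    refine Finset.sum_congr rfl fun b _ => ?_
    rw [← hcz, hatInd, Finset.mul_sum]
  calc _ = ‖((∑ b ∈ B, ‖hatInd A b‖ : ℝ) : ℂ)‖ := by
        rw [Complex.norm_real, Real.norm_of_nonneg (Finset.sum_nonneg fun _ _ => norm_nonneg _)]
    _ ≤ _ := by
        rw [h]
        exact norm_sum_le _ _

theorem statement_11 :
    ∃ C > (0 : ℝ), ∀ N m : ℕ, 0 < N → 0 < m →
      ∀ A : Finset ℕ, A.Nonempty → A ⊆ Finset.Icc 1 N →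
      ∀ α : ℝ, α = (A.card : ℝ) / N →
      ∀ B : Finset ℝ, (∀ b ∈ B, 0 < b ∧ b ≤ 1) →
        (∑ b ∈ B, ‖hatInd A b‖) ≤
          C * A.card * α ^ (-(1 / (2 * (m : ℝ)))) *
            (approxEnergy m B (1 / N) : ℝ) ^ (1 / (2 * (m : ℝ))) := by
  refine ⟨2 * Real.exp (2 * Real.pi), by positivity, ?_⟩
  rintro N m hN hm A hA hAN α rfl B hB
  obtain ⟨c, hc, hT⟩ := sum_norm_hatInd_le A B
  have hA0 : (0 : ℝ) < A.card := by exact_mod_cast hA.card_pos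
  have hN0 : (0 : ℝ) < N := by exact_mod_cast hN
  set E : ℝ := Nat.cast (approxEnergy m B (1 / N))
  have hE0 : 0 ≤ E := Nat.cast_nonneg _
  have hroot : ∀ t : ℝ, 0 ≤ t → (t ^ (1 / (2 * (m : ℝ)))) ^ (2 * m) = t := by
    intro t ht
    rw [← Real.rpow_natCast, ← Real.rpow_mul ht]
    push_cast
    rw [one_div_mul_cancel (by positivity), Real.rpow_one]
  refine le_of_pow_le_pow_left₀ (n := 2 * m) (by omega) (by positivity) ?_
  rw [mul_pow, mul_pow, hroot E hE0, Real.rpow_neg (by positivity), inv_pow,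
    hroot _ (by positivity)]
  have hexp : Real.exp (2 * Real.pi) ^ 2 * (m + 1) ≤ (2 * Real.exp (2 * Real.pi)) ^ (2 * m) := by
    rw [mul_pow, mul_comm]
    have h1 : (1 : ℝ) ≤ Real.exp (2 * Real.pi) := Real.one_le_exp (by positivity)
    have h2 : (m + 1 : ℝ) ≤ 2 ^ (2 * m) := by
      have : m + 1 ≤ 2 ^ (2 * m) :=
        (Nat.lt_two_pow_self (n := m)).trans_le (Nat.pow_le_pow_right (by norm_num) (by omega))
      exact_mod_cast this
    gcongr
    omega
  have hmean : (∑ a ∈ A, ‖∑ b ∈ B, c b * eu (a * b)‖) ^ (2 * m) ≤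
      (A.card : ℝ) ^ (2 * m - 1) * ∑ a ∈ A, ‖∑ b ∈ B, c b * eu (a * b)‖ ^ (2 * m) := by
    have h := pow_sum_le_card_mul_sum_pow (s := A)
      (f := fun a : ℕ => ‖∑ b ∈ B, c b * eu (a * b)‖) (fun _ _ => norm_nonneg _) (2 * m - 1)
    rwa [Nat.sub_add_cancel (by omega)] at h
  have hpowA : (A.card : ℝ) ^ (2 * m) = A.card ^ (2 * m - 1) * A.card := by
    rw [← pow_succ]
    congr 1
    omega
  calc _ ≤ (∑ a ∈ A, ‖∑ b ∈ B, c b * eu (a * b)‖) ^ (2 * m) := by gcongr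
    _ ≤ (A.card : ℝ) ^ (2 * m - 1) *
        ∑ a ∈ Finset.Icc 1 N, ‖∑ b ∈ B, c b * eu (a * b)‖ ^ (2 * m) := by
        refine hmean.trans ?_
        gcongr
    _ ≤ (A.card : ℝ) ^ (2 * m - 1) * (Real.exp (2 * Real.pi) ^ 2 * (N * (m + 1) * E)) := by
        gcongr
        exact sum_norm_pow_expSum_le hN m B hB c hc
    _ = (A.card : ℝ) ^ (2 * m - 1) * (Real.exp (2 * Real.pi) ^ 2 * (m + 1)) * N * E := by ring
    _ ≤ (A.card : ℝ) ^ (2 * m - 1) * (2 * Real.exp (2 * Real.pi)) ^ (2 * m) * N * E := by gcongr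
    _ = _ := by
        rw [mul_pow (2 * Real.exp (2 * Real.pi)), hpowA]
        field_simp
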